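/- Let z₁, z₂, z₃ be nonzero complex numbers with z₁z₂z₃ = 1 and let n₁ ≥ n₂ ≥ n₃ ≥ 1 be integers. For j = 1, 2, 3 set A_j = ℂ[t^{±1}]/((t − z_j)^{n_j}) and let η_j ∈ A_j be the class of 1. Let V = (A₁ ⊗_ℂ A₂ ⊗_ℂ A₃)/H. Then V is spanned over ℂ by the classes of the elements η₁ ⊗ (t − z₂)^{k₂}η₂ ⊗ (t − z₃)^{k₃}η₃ for 0 ≤ k₂ < n₂ and 0 ≤ k₃ < n₃. Moreover, if n₂ + n₃ ≤ n₁ + 1, this family is a basis of V, and hence dim_ℂ V = n₂n₃. -/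

import Mathlib

open LaurentPolynomial TensorProduct

set_option synthInstance.maxHeartbeats 1000000
set_option maxHeartbeats 1000000
set_option maxSynthPendingDepth 3
noncomputable section

abbrev LQuot (K : Type) [Field K] (p : LaurentPolynomial K) : Type :=
  LaurentPolynomial K ⧸ Ideal.span {p}

/-- The class of a Laurent polynomial in the quotient by `(p)`. -/
def clsOf (K : Type) [Field K] (p x : LaurentPolynomial K) : LQuot K p :=
  Ideal.Quotient.mk (Ideal.span {p}) x

abbrev Trip (K : Type) [Field K] (p q r : LaurentPolynomial K) : Type :=
  (LQuot K p ⊗[K] LQuot K q) ⊗[K] LQuot K r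

/-- The holonomy subspace: the `K`-span of the elements
`β₁ ⊗ β₂ ⊗ β₃ - tβ₁ ⊗ tβ₂ ⊗ tβ₃`. -/
def holSub (K : Type) [Field K] (p q r : LaurentPolynomial K) :
    Submodule K (Trip K p q r) :=
  Submodule.span K { x | ∃ (a : LQuot K p) (b : LQuot K q) (c : LQuot K r),
    x = (a ⊗ₜ[K] b) ⊗ₜ[K] c -
      (((T 1 : LaurentPolynomial K) • a) ⊗ₜ[K] ((T 1 : LaurentPolynomial K) • b)) ⊗ₜ[K]
        ((T 1 : LaurentPolynomial K) • c) }

/-- The class of `(t-z₁)^{k₁}η₁ ⊗ (t-z₂)^{k₂}η₂ ⊗ (t-z₃)^{k₃}η₃` in the quotient of the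
triple tensor product by the holonomy subspace. -/
def genElt (z₁ z₂ z₃ : ℂ) (n₁ n₂ n₃ : ℕ) (k₁ k₂ k₃ : ℕ) :
    Trip ℂ ((T 1 - C z₁) ^ n₁) ((T 1 - C z₂) ^ n₂) ((T 1 - C z₃) ^ n₃) ⧸
      holSub ℂ ((T 1 - C z₁) ^ n₁) ((T 1 - C z₂) ^ n₂) ((T 1 - C z₃) ^ n₃) :=
  Submodule.Quotient.mk
    ((clsOf ℂ ((T 1 - C z₁) ^ n₁) ((T 1 - C z₁) ^ k₁) ⊗ₜ[ℂ]
        clsOf ℂ ((T 1 - C z₂) ^ n₂) ((T 1 - C z₂) ^ k₂)) ⊗ₜ[ℂ]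
      clsOf ℂ ((T 1 - C z₃) ^ n₃) ((T 1 - C z₃) ^ k₃))

theorem lq_mk_T1 (z : ℂ) (n : ℕ) :
    clsOf ℂ ((T 1 - C z) ^ n) (T 1 - C z) ^ n = 0 := by
  unfold clsOf
  rw [← map_pow]
  exact Ideal.Quotient.eq_zero_iff_mem.2 (Ideal.subset_span rfl)

/-- The class of `T k` as a unit power. -/
def lqUnit (p : LaurentPolynomial ℂ) : (LQuot ℂ p)ˣ where
  val := clsOf ℂ p (T 1)
  inv := clsOf ℂ p (T (-1))
  val_inv := by unfold clsOf; rw [← map_mul, ← T_add]; simp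
  inv_val := by unfold clsOf; rw [← map_mul, ← T_add]; simp

theorem laurent_algHom_ext {S : Type*} [CommRing S] [Algebra ℂ S]
    {f g : LaurentPolynomial ℂ →ₐ[ℂ] S} (h : f (T 1) = g (T 1)) : f = g := by
  have h' : f (T (-1)) = g (T (-1)) := by
    have hf : f (T 1) * f (T (-1)) = 1 := by rw [← map_mul, ← T_add]; simp
    have hg : g (T 1) * g (T (-1)) = 1 := by rw [← map_mul, ← T_add]; simp
    calc f (T (-1)) = f (T (-1)) * (g (T 1) * g (T (-1))) := by rw [hg, mul_one]
      _ = (f (T 1) * f (T (-1))) * g (T (-1)) := by rw [h]; ring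
      _ = _ := by rw [hf, one_mul]
  refine AlgHom.ext fun x => ?_
  induction x using LaurentPolynomial.induction_on with
  | h_C a => rw [C_eq_algebraMap, AlgHom.commutes, AlgHom.commutes]
  | h_add hp hq => rw [map_add, map_add, hp, hq]
  | h_C_mul_T n a _ =>
    have e : (T ((n : ℤ) + 1) : LaurentPolynomial ℂ) = T 1 ^ (n + 1) := by
      rw [T_pow]; simp
    rw [map_mul, map_mul, e, map_pow, map_pow, h, C_eq_algebraMap, AlgHom.commutes,
      AlgHom.commutes]
  | h_C_mul_T_Z n a _ =>
    have e : (T (-(n : ℤ) - 1) : LaurentPolynomial ℂ) = T (-1) ^ (n + 1) := by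
      rw [T_pow]; congr 1; push_cast; ring
    rw [map_mul, map_mul, e, map_pow, map_pow, h', C_eq_algebraMap, AlgHom.commutes,
      AlgHom.commutes]

theorem lq_algHom_ext {S : Type*} [CommRing S] [Algebra ℂ S] {p : LaurentPolynomial ℂ}
    {f g : LQuot ℂ p →ₐ[ℂ] S} (h : f (clsOf ℂ p (T 1)) = g (clsOf ℂ p (T 1))) : f = g :=
  Ideal.Quotient.algHom_ext ℂ (laurent_algHom_ext h)

/-- Evaluation at a unit as an algebra homomorphism. -/
def laurentEval {S : Type*} [CommRing S] [Algebra ℂ S] (u : Sˣ) :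
    LaurentPolynomial ℂ →ₐ[ℂ] S :=
  { LaurentPolynomial.eval₂ (algebraMap ℂ S) u with
    commutes' := fun r => by
      rw [← C_eq_algebraMap]
      exact LaurentPolynomial.eval₂_C _ _ _ }

theorem laurentEval_T {S : Type*} [CommRing S] [Algebra ℂ S] (u : Sˣ) :
    laurentEval u (T 1) = (u : S) := by
  have := LaurentPolynomial.eval₂_T (algebraMap ℂ S) u 1
  rw [zpow_one] at this
  exact this

theorem laurentEval_sub {S : Type*} [CommRing S] [Algebra ℂ S] (u : Sˣ) (z : ℂ) :
    laurentEval u (T 1 - C z) = (u : S) - algebraMap ℂ S z := by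
  rw [map_sub, laurentEval_T, C_eq_algebraMap, AlgHom.commutes]

/-- The induced homomorphism on the quotient. -/
def lqLift {S : Type*} [CommRing S] [Algebra ℂ S] (z : ℂ) (n : ℕ) (u : Sˣ)
    (hu : ((u : S) - algebraMap ℂ S z) ^ n = 0) :
    LQuot ℂ ((T 1 - C z) ^ n) →ₐ[ℂ] S :=
  Ideal.Quotient.liftₐ _ (laurentEval u) (by
    intro a ha
    obtain ⟨b, rfl⟩ := Ideal.mem_span_singleton'.1 ha
    rw [map_mul, map_pow, laurentEval_sub, hu, mul_zero])

theorem lqLift_T {S : Type*} [CommRing S] [Algebra ℂ S] (z : ℂ) (n : ℕ) (u : Sˣ)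
    (hu : ((u : S) - algebraMap ℂ S z) ^ n = 0) :
    lqLift z n u hu (clsOf ℂ _ (T 1)) = u :=
  laurentEval_T u

theorem clsOf_sub (p : LaurentPolynomial ℂ) (z : ℂ) :
    clsOf ℂ p (T 1 - C z) = clsOf ℂ p (T 1) - algebraMap ℂ _ z := rfl

theorem adj_pow (n : ℕ) : AdjoinRoot.root (Polynomial.X ^ n : Polynomial ℂ) ^ n = 0 := by
  rw [← AdjoinRoot.mk_X, ← map_pow, AdjoinRoot.mk_self]

theorem adj_unit (z : ℂ) (hz : z ≠ 0) (n : ℕ) :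
    IsUnit (AdjoinRoot.root (Polynomial.X ^ n : Polynomial ℂ) + algebraMap ℂ _ z) := by
  refine IsNilpotent.isUnit_add_right_of_commute ⟨n, adj_pow n⟩ ?_ (Commute.all _ _)
  exact (IsUnit.mk0 z hz).map _

/-- `ℂ[t^±]/(t-z)^n ≃ ℂ[X]/X^n`. -/
def lqEquiv (z : ℂ) (hz : z ≠ 0) (n : ℕ) :
    AdjoinRoot (Polynomial.X ^ n : Polynomial ℂ) ≃ₐ[ℂ] LQuot ℂ ((T 1 - C z) ^ n) :=
  AlgEquiv.ofAlgHom
    (AdjoinRoot.liftAlgHom _ (Algebra.ofId ℂ _) (clsOf ℂ _ (T 1 - C z)) (by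
      rw [Polynomial.eval₂_pow, Polynomial.eval₂_X, lq_mk_T1]))
    (lqLift z n (adj_unit z hz n).unit (by
      rw [IsUnit.unit_spec, add_sub_cancel_right, adj_pow]))
    (by
      apply lq_algHom_ext
      rw [AlgHom.comp_apply, lqLift_T, IsUnit.unit_spec, map_add, AlgHom.commutes,
        AdjoinRoot.liftAlgHom_root, clsOf_sub, sub_add_cancel]
      rfl)
    (by
      apply AdjoinRoot.algHom_ext
      rw [AlgHom.comp_apply, AdjoinRoot.liftAlgHom_root, clsOf_sub, map_sub, lqLift_T,
        AlgHom.commutes, IsUnit.unit_spec, add_sub_cancel_right]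
      rfl)

/-- The basis of powers of `t - z`. -/
def lqBasis (z : ℂ) (hz : z ≠ 0) (n : ℕ) :
    Module.Basis (Fin n) ℂ (LQuot ℂ ((T 1 - C z) ^ n)) :=
  ((AdjoinRoot.powerBasis' (Polynomial.monic_X_pow (R := ℂ) n)).basis.map
    (lqEquiv z hz n).toLinearEquiv).reindex (finCongr (Polynomial.natDegree_X_pow n))

theorem lqBasis_apply (z : ℂ) (hz : z ≠ 0) (n : ℕ) (i : Fin n) :
    lqBasis z hz n i = clsOf ℂ _ ((T 1 - C z) ^ (i : ℕ)) := by
  unfold lqBasis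
  rw [Module.Basis.reindex_apply, Module.Basis.map_apply, PowerBasis.basis_eq_pow]
  have : lqEquiv z hz n (AdjoinRoot.root _) = clsOf ℂ _ (T 1 - C z) :=
    AdjoinRoot.liftAlgHom_root (Polynomial.X ^ n : Polynomial ℂ) (Algebra.ofId ℂ _) _ (by
      rw [Polynomial.eval₂_pow, Polynomial.eval₂_X, lq_mk_T1])
  rw [AlgEquiv.toLinearEquiv_apply, AdjoinRoot.powerBasis'_gen, map_pow, this]
  exact (map_pow (Ideal.Quotient.mk _) _ _).symm

theorem hol_T (p q r : LaurentPolynomial ℂ) (a : LQuot ℂ p) (b : LQuot ℂ q) (c : LQuot ℂ r) :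
    (holSub ℂ p q r).mkQ ((clsOf ℂ p (T 1) * a) ⊗ₜ[ℂ] (clsOf ℂ q (T 1) * b) ⊗ₜ[ℂ]
      (clsOf ℂ r (T 1) * c)) = (holSub ℂ p q r).mkQ (a ⊗ₜ[ℂ] b ⊗ₜ[ℂ] c) := by
  symm
  rw [← sub_eq_zero, ← map_sub, Submodule.mkQ_apply, Submodule.Quotient.mk_eq_zero]
  exact Submodule.subset_span ⟨a, b, c, rfl⟩

theorem clsOf_T_mul (p : LaurentPolynomial ℂ) (m n : ℤ) (a : LQuot ℂ p) :
    clsOf ℂ p (T m) * (clsOf ℂ p (T n) * a) = clsOf ℂ p (T (m + n)) * a := by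
  rw [T_add, ← mul_assoc]; rfl

theorem clsOf_T_zero_mul (p : LaurentPolynomial ℂ) (a : LQuot ℂ p) :
    clsOf ℂ p (T 0) * a = a := by
  rw [T_zero]; exact one_mul a

theorem hol_Tn (p q r : LaurentPolynomial ℂ) (k : ℤ) :
    ∀ (a : LQuot ℂ p) (b : LQuot ℂ q) (c : LQuot ℂ r),
    (holSub ℂ p q r).mkQ ((clsOf ℂ p (T k) * a) ⊗ₜ[ℂ] (clsOf ℂ q (T k) * b) ⊗ₜ[ℂ]
      (clsOf ℂ r (T k) * c)) = (holSub ℂ p q r).mkQ (a ⊗ₜ[ℂ] b ⊗ₜ[ℂ] c) := by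
  induction k using Int.induction_on with
  | zero => intro a b c; simp only [clsOf_T_zero_mul]
  | succ i ih =>
    intro a b c
    rw [← ih a b c, ← hol_T _ _ _ (clsOf ℂ p (T i) * a), clsOf_T_mul, clsOf_T_mul, clsOf_T_mul, add_comm (1 : ℤ)]
  | pred i ih =>
    intro a b c
    rw [← ih a b c, ← hol_T, clsOf_T_mul, clsOf_T_mul, clsOf_T_mul]
    congr 6 <;> ring_nf

/-- The map `b ⊗ c ↦ [1 ⊗ b ⊗ c]`. -/
def inc (p q r : LaurentPolynomial ℂ) :
    LQuot ℂ q ⊗[ℂ] LQuot ℂ r →ₗ[ℂ] Trip ℂ p q r ⧸ holSub ℂ p q r :=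
  (holSub ℂ p q r).mkQ ∘ₗ
    TensorProduct.map (TensorProduct.mk ℂ (LQuot ℂ p) (LQuot ℂ q) (clsOf ℂ p 1)) LinearMap.id

theorem inc_apply (p q r : LaurentPolynomial ℂ) (b : LQuot ℂ q) (c : LQuot ℂ r) :
    inc p q r (b ⊗ₜ c) = (holSub ℂ p q r).mkQ (clsOf ℂ p 1 ⊗ₜ[ℂ] b ⊗ₜ[ℂ] c) := rfl

theorem inc_surj_aux (p q r : LaurentPolynomial ℂ) (x : LaurentPolynomial ℂ)
    (b : LQuot ℂ q) (c : LQuot ℂ r) :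
    (holSub ℂ p q r).mkQ (clsOf ℂ p x ⊗ₜ[ℂ] b ⊗ₜ[ℂ] c) ∈ LinearMap.range (inc p q r) := by
  induction x using LaurentPolynomial.induction_on' with
  | add f g hf hg =>
    have : clsOf ℂ p (f + g) = clsOf ℂ p f + clsOf ℂ p g := rfl
    rw [this, TensorProduct.add_tmul, TensorProduct.add_tmul, map_add]
    exact add_mem hf hg
  | C_mul_T n a =>
    have : clsOf ℂ p (C a * T n) = a • clsOf ℂ p (T n) := by
      rw [Algebra.smul_def]; rfl
    rw [this, ← TensorProduct.smul_tmul', ← TensorProduct.smul_tmul', map_smul]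
    refine Submodule.smul_mem _ _ ⟨(clsOf ℂ q (T (-n)) * b) ⊗ₜ (clsOf ℂ r (T (-n)) * c), ?_⟩
    rw [inc_apply, ← hol_Tn p q r n, clsOf_T_mul, clsOf_T_mul, add_neg_cancel,
      clsOf_T_zero_mul, clsOf_T_zero_mul]
    congr 3
    exact mul_one _

theorem inc_surj (p q r : LaurentPolynomial ℂ) : LinearMap.range (inc p q r) = ⊤ := by
  rw [eq_top_iff]
  rintro v -
  obtain ⟨w, rfl⟩ := Submodule.mkQ_surjective _ v
  induction w using TensorProduct.induction_on with
  | zero => rw [map_zero]; exact zero_mem _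
  | add x y hx hy => rw [map_add]; exact add_mem hx hy
  | tmul x c =>
    induction x using TensorProduct.induction_on with
    | zero => rw [TensorProduct.zero_tmul, map_zero]; exact zero_mem _
    | add x y hx hy => rw [TensorProduct.add_tmul, map_add]; exact add_mem hx hy
    | tmul a b =>
      obtain ⟨x, rfl⟩ := Ideal.Quotient.mk_surjective a
      exact inc_surj_aux p q r x b c

theorem nil_aux {S : Type*} [CommRing S] (x y α β : S) (n₁ n₂ n₃ : ℕ) (hx : x ^ n₂ = 0)
    (hy : y ^ n₃ = 0) (h : n₂ + n₃ ≤ n₁ + 1) : (α * x + β * y) ^ n₁ = 0 := by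
  refine Commute.add_pow_eq_zero_of_add_le_succ_of_pow_eq_zero (Commute.all _ _)
    (m := n₂) (n := n₃) ?_ ?_ h
  · rw [mul_pow, hx, mul_zero]
  · rw [mul_pow, hy, mul_zero]

section retract

variable (z₁ z₂ z₃ : ℂ) (n₁ n₂ n₃ : ℕ)

/-- The unit `(t ⊗ t)⁻¹`. -/
def uu : (LQuot ℂ ((T 1 - C z₂) ^ n₂) ⊗[ℂ] LQuot ℂ ((T 1 - C z₃) ^ n₃))ˣ where
  val := clsOf ℂ _ (T (-1)) ⊗ₜ clsOf ℂ _ (T (-1))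
  inv := clsOf ℂ _ (T 1) ⊗ₜ clsOf ℂ _ (T 1)
  val_inv := by
    rw [Algebra.TensorProduct.tmul_mul_tmul]
    exact congrArg₂ _ (lqUnit _).inv_val (lqUnit _).inv_val
  inv_val := by
    rw [Algebra.TensorProduct.tmul_mul_tmul]
    exact congrArg₂ _ (lqUnit _).val_inv (lqUnit _).val_inv

theorem uu_nil (hprod : z₁ * z₂ * z₃ = 1) (h : n₂ + n₃ ≤ n₁ + 1) :
    ((uu z₂ z₃ n₂ n₃ : LQuot ℂ ((T 1 - C z₂) ^ n₂) ⊗[ℂ] LQuot ℂ ((T 1 - C z₃) ^ n₃))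
      - algebraMap ℂ _ z₁) ^ n₁ = 0 := by
  let f := Algebra.TensorProduct.includeLeft (R := ℂ) (S := ℂ)
    (A := LQuot ℂ ((T 1 - C z₂) ^ n₂)) (B := LQuot ℂ ((T 1 - C z₃) ^ n₃))
  let g := Algebra.TensorProduct.includeRight (R := ℂ)
    (A := LQuot ℂ ((T 1 - C z₂) ^ n₂)) (B := LQuot ℂ ((T 1 - C z₃) ^ n₃))
  have hx : (f (clsOf ℂ _ (T 1)) - algebraMap ℂ _ z₂) ^ n₂ = 0 := by
    have := congrArg f (lq_mk_T1 z₂ n₂)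
    rwa [map_pow, clsOf_sub, map_sub, AlgHom.commutes, map_zero] at this
  have hy : (g (clsOf ℂ _ (T 1)) - algebraMap ℂ _ z₃) ^ n₃ = 0 := by
    have := congrArg g (lq_mk_T1 z₃ n₃)
    rwa [map_pow, clsOf_sub, map_sub, AlgHom.commutes, map_zero] at this
  have hinv : ((uu z₂ z₃ n₂ n₃)⁻¹).val = f (clsOf ℂ _ (T 1)) * g (clsOf ℂ _ (T 1)) := by
    change clsOf ℂ _ (T 1) ⊗ₜ clsOf ℂ _ (T 1) = _
    simp [f, g]
  have hu := (uu z₂ z₃ n₂ n₃).mul_inv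
  rw [hinv] at hu
  have hz : algebraMap ℂ (LQuot ℂ ((T 1 - C z₂) ^ n₂) ⊗[ℂ] LQuot ℂ ((T 1 - C z₃) ^ n₃)) z₁
    * algebraMap ℂ _ z₂ * algebraMap ℂ _ z₃ = 1 := by
    rw [← map_mul, ← map_mul, hprod, map_one]
  generalize (uu z₂ z₃ n₂ n₃).val = u at *
  generalize f (clsOf ℂ _ (T 1)) = s at *
  generalize g (clsOf ℂ _ (T 1)) = t at *
  generalize algebraMap ℂ (LQuot ℂ ((T 1 - C z₂) ^ n₂) ⊗[ℂ] LQuot ℂ ((T 1 - C z₃) ^ n₃)) z₁ = w₁ at *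
  generalize algebraMap ℂ (LQuot ℂ ((T 1 - C z₂) ^ n₂) ⊗[ℂ] LQuot ℂ ((T 1 - C z₃) ^ n₃)) z₂ = w₂ at *
  generalize algebraMap ℂ (LQuot ℂ ((T 1 - C z₂) ^ n₂) ⊗[ℂ] LQuot ℂ ((T 1 - C z₃) ^ n₃)) z₃ = w₃ at *
  have e : u - w₁ = (-u * w₁ * t) * (s - w₂) + (-u * w₁ * w₂) * (t - w₃) := by
    linear_combination (-u) * hz + w₁ * hu
  rw [e]
  exact nil_aux _ _ _ _ _ _ _ hx hy h

/-- The retraction on the triple tensor product. -/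
def retA (hprod : z₁ * z₂ * z₃ = 1) (h : n₂ + n₃ ≤ n₁ + 1) :
    Trip ℂ ((T 1 - C z₁) ^ n₁) ((T 1 - C z₂) ^ n₂) ((T 1 - C z₃) ^ n₃) →ₐ[ℂ]
      LQuot ℂ ((T 1 - C z₂) ^ n₂) ⊗[ℂ] LQuot ℂ ((T 1 - C z₃) ^ n₃) :=
  Algebra.TensorProduct.productMap
    (Algebra.TensorProduct.productMap
      (lqLift z₁ n₁ (uu z₂ z₃ n₂ n₃) (uu_nil z₁ z₂ z₃ n₁ n₂ n₃ hprod h))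
      Algebra.TensorProduct.includeLeft)
    Algebra.TensorProduct.includeRight

theorem retA_apply (hprod : z₁ * z₂ * z₃ = 1) (h : n₂ + n₃ ≤ n₁ + 1) (a b c) :
    retA z₁ z₂ z₃ n₁ n₂ n₃ hprod h (a ⊗ₜ b ⊗ₜ c) =
      lqLift z₁ n₁ (uu z₂ z₃ n₂ n₃) (uu_nil z₁ z₂ z₃ n₁ n₂ n₃ hprod h) a * (b ⊗ₜ c) := by
  unfold retA
  rw [Algebra.TensorProduct.productMap_apply_tmul, Algebra.TensorProduct.productMap_apply_tmul,
    mul_assoc]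
  simp

/-- The retraction on the quotient. -/
def ret (hprod : z₁ * z₂ * z₃ = 1) (h : n₂ + n₃ ≤ n₁ + 1) :
    (Trip ℂ ((T 1 - C z₁) ^ n₁) ((T 1 - C z₂) ^ n₂) ((T 1 - C z₃) ^ n₃) ⧸
      holSub ℂ ((T 1 - C z₁) ^ n₁) ((T 1 - C z₂) ^ n₂) ((T 1 - C z₃) ^ n₃)) →ₗ[ℂ]
      LQuot ℂ ((T 1 - C z₂) ^ n₂) ⊗[ℂ] LQuot ℂ ((T 1 - C z₃) ^ n₃) :=
  Submodule.liftQ _ (retA z₁ z₂ z₃ n₁ n₂ n₃ hprod h).toLinearMap (by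
    unfold holSub
    rw [Submodule.span_le]
    rintro _ ⟨a, b, c, rfl⟩
    rw [SetLike.mem_coe, LinearMap.mem_ker, AlgHom.toLinearMap_apply]
    have e : ∀ (p : LaurentPolynomial ℂ) (a : LQuot ℂ p),
      (T 1 : LaurentPolynomial ℂ) • a = clsOf ℂ p (T 1) * a := fun p a => rfl
    rw [e, e, e, map_sub, retA_apply, retA_apply, map_mul, lqLift_T,
      ← Algebra.TensorProduct.tmul_mul_tmul]
    have hu := (uu z₂ z₃ n₂ n₃).mul_inv
    have hi : ((uu z₂ z₃ n₂ n₃)⁻¹).val = clsOf ℂ _ (T 1) ⊗ₜ clsOf ℂ _ (T 1) := rfl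
    rw [hi] at hu
    rw [mul_mul_mul_comm, hu, one_mul, sub_self])

end retract

theorem stmt8 (z₁ z₂ z₃ : ℂ) (hz₁ : z₁ ≠ 0) (hz₂ : z₂ ≠ 0) (hz₃ : z₃ ≠ 0)
    (hprod : z₁ * z₂ * z₃ = 1) (n₁ n₂ n₃ : ℕ) (hn₃ : 1 ≤ n₃) (hn₂₃ : n₃ ≤ n₂)
    (hn₁₂ : n₂ ≤ n₁) :
    Submodule.span ℂ (Set.range (fun k : Fin n₂ × Fin n₃ =>
        genElt z₁ z₂ z₃ n₁ n₂ n₃ 0 (k.1 : ℕ) (k.2 : ℕ))) = ⊤ ∧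
      (n₂ + n₃ ≤ n₁ + 1 →
        LinearIndependent ℂ (fun k : Fin n₂ × Fin n₃ =>
          genElt z₁ z₂ z₃ n₁ n₂ n₃ 0 (k.1 : ℕ) (k.2 : ℕ)) ∧
        Module.finrank ℂ
          (Trip ℂ ((T 1 - C z₁) ^ n₁) ((T 1 - C z₂) ^ n₂) ((T 1 - C z₃) ^ n₃) ⧸
            holSub ℂ ((T 1 - C z₁) ^ n₁) ((T 1 - C z₂) ^ n₂) ((T 1 - C z₃) ^ n₃)) =
          n₂ * n₃) := by
  have hinc : ∀ k : Fin n₂ × Fin n₃, genElt z₁ z₂ z₃ n₁ n₂ n₃ 0 (k.1 : ℕ) (k.2 : ℕ) =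
      inc _ _ _ (((lqBasis z₂ hz₂ n₂).tensorProduct (lqBasis z₃ hz₃ n₃)) k) := by
    rintro ⟨i, j⟩
    rw [Module.Basis.tensorProduct_apply, lqBasis_apply, lqBasis_apply, inc_apply]
    unfold genElt
    rw [pow_zero]
    rfl
  have hspan : Submodule.span ℂ (Set.range (fun k : Fin n₂ × Fin n₃ =>
        genElt z₁ z₂ z₃ n₁ n₂ n₃ 0 (k.1 : ℕ) (k.2 : ℕ))) = ⊤ := by
    simp only [hinc]
    rw [← inc_surj, ← Submodule.map_top,
      ← ((lqBasis z₂ hz₂ n₂).tensorProduct (lqBasis z₃ hz₃ n₃)).span_eq, Submodule.map_span,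
      ← Set.range_comp]
    rfl
  refine ⟨hspan, fun h => ?_⟩
  have hli : LinearIndependent ℂ (fun k : Fin n₂ × Fin n₃ =>
          genElt z₁ z₂ z₃ n₁ n₂ n₃ 0 (k.1 : ℕ) (k.2 : ℕ)) := by
    apply LinearIndependent.of_comp (ret z₁ z₂ z₃ n₁ n₂ n₃ hprod h)
    suffices key : (ret z₁ z₂ z₃ n₁ n₂ n₃ hprod h ∘ fun k : Fin n₂ × Fin n₃ =>
        genElt z₁ z₂ z₃ n₁ n₂ n₃ 0 (k.1 : ℕ) (k.2 : ℕ)) =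
        ((lqBasis z₂ hz₂ n₂).tensorProduct (lqBasis z₃ hz₃ n₃)) by
      rw [key]
      exact ((lqBasis z₂ hz₂ n₂).tensorProduct (lqBasis z₃ hz₃ n₃)).linearIndependent
    funext ⟨i, j⟩
    rw [Module.Basis.tensorProduct_apply, lqBasis_apply, lqBasis_apply]
    change retA z₁ z₂ z₃ n₁ n₂ n₃ hprod h (_ ⊗ₜ _ ⊗ₜ _) = _
    rw [retA_apply, pow_zero]
    change lqLift z₁ n₁ _ _ 1 * _ = _
    rw [map_one, one_mul]
  refine ⟨hli, ?_⟩
  rw [Module.finrank_eq_card_basis (Module.Basis.mk hli hspan.ge)]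
  simp
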